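/- arXiv:2506.22263 — 8 statements merged into one kernel-verified Lean document; each statement's English description precedes it below -/
import Mathlib

section
/- Let D = (V, E, w) be a strongly connected weighted digraph and let X = (V, ω_D) be its associated shortest-distance digraph. Then f_D(σ) = f_X(σ) for every nonempty σ ⊆ V; in particular the walk-length filtrations of D and of X coincide, i.e., W_δ^D = W_δ^X for all δ ∈ ℝ. -/
/-!
A walk of `D` is also a walk of the complete digraph `X`, and there it weighs no more, because
`ω_D(u, v) ≤ w(u, v)` on every edge (`walkWeight_sdist_le`). Conversely, replacing each step
`(u, v)` of a walk of `X` by walks of `D` from `u` to `v` of weight close to `ω_D(u, v)`, and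
concatenating them, gives walks of `D` that visit the same vertices and whose weights have infimum
at most the weight of the walk of `X` (`refinement_le`). Attainment of the infimum in `ω_D` is not
needed, since in `ℝ≥0∞` addition commutes with arbitrary infima.
-/

open scoped ENNReal NNReal

variable {V : Type*}

/-- The weight of a walk, given as a list of vertices: the sum of the weights of
consecutive pairs. -/
noncomputable def walkWeight (w : V → V → ℝ≥0∞) (l : List V) : ℝ≥0∞ :=
  ((l.zip l.tail).map fun p => w p.1 p.2).sum

/-- A walk in the digraph with edge relation `E`: a nonempty list of vertices in which
every consecutive pair is an edge. -/
def IsWalk (E : V → V → Prop) (l : List V) : Prop :=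
  l ≠ [] ∧ l.Chain' E

/-- The walk-length filtration value of a set of vertices: the infimum of the weights of
walks containing all vertices of `σ` (`∞` if there is no such walk). -/
noncomputable def wlf (E : V → V → Prop) (w : V → V → ℝ≥0∞) (σ : Set V) : ℝ≥0∞ :=
  ⨅ (l : List V) (_ : IsWalk E l ∧ ∀ v ∈ σ, v ∈ l), walkWeight w l

/-- The walk-length complex at level `δ`. -/
def wlComplex (E : V → V → Prop) (w : V → V → ℝ≥0∞) (δ : ℝ) : Set (Set V) :=
  {σ | σ.Nonempty ∧ (wlf E w σ : EReal) ≤ (δ : EReal)}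

/-- Strong connectivity: for every ordered pair `(u, v)` there is a walk from `u` to `v`. -/
def StronglyConnected (E : V → V → Prop) : Prop :=
  ∀ u v : V, ∃ l : List V, IsWalk E l ∧ l.head? = some u ∧ l.getLast? = some v

/-- The shortest-distance function `ω_D(u,v)`: the infimum of weights of walks from `u` to
`v`. -/
noncomputable def sdist (E : V → V → Prop) (w : V → V → ℝ≥0∞) (u v : V) : ℝ≥0∞ :=
  ⨅ (l : List V) (_ : IsWalk E l ∧ l.head? = some u ∧ l.getLast? = some v), walkWeight w l

@[simp] lemma walkWeight_singleton (w : V → V → ℝ≥0∞) (a : V) : walkWeight w [a] = 0 := by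
  simp [walkWeight]

@[simp] lemma walkWeight_cons_cons (w : V → V → ℝ≥0∞) (a b : V) (l : List V) :
    walkWeight w (a :: b :: l) = w a b + walkWeight w (b :: l) := by
  simp [walkWeight]

/-- Weights add when a walk ending at `b` is concatenated with a walk `b :: q`, the shared vertex
`b` being listed once. -/
lemma walkWeight_append (w : V → V → ℝ≥0∞) (b : V) (q p : List V) (hp : p.getLast? = some b) :
    walkWeight w (p ++ q) = walkWeight w p + walkWeight w (b :: q) := by
  induction p with
  | nil => simp at hp
  | cons x p ih =>
    cases p with
    | nil =>
      obtain rfl : x = b := by simpa using hp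
      simp
    | cons y p =>
      rw [List.getLast?_cons_cons] at hp
      have h := ih hp
      rw [List.cons_append] at h
      simp only [List.cons_append, walkWeight_cons_cons, h, add_assoc]

lemma isWalk_append (E : V → V → Prop) {b : V} {q p : List V} (hp : IsWalk E p)
    (hb : p.getLast? = some b) (hq : IsWalk E (b :: q)) : IsWalk E (p ++ q) := by
  refine ⟨by simp [hp.1], List.isChain_append.2 ⟨hp.2, List.IsChain.tail hq.2, ?_⟩⟩
  intro x hx y hy
  obtain rfl : b = x := by simpa [hb] using hx
  exact (List.isChain_cons.1 hq.2).1 y hy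

lemma sdist_le_of_edge (E : V → V → Prop) (w : V → V → ℝ≥0∞) {u v : V} (h : E u v) :
    sdist E w u v ≤ w u v := by
  have hW : IsWalk E [u, v] := ⟨by simp, List.isChain_pair.2 h⟩
  refine (iInf₂_le [u, v] ⟨hW, by simp, by simp⟩).trans ?_
  simp

lemma walkWeight_sdist_le (E : V → V → Prop) (w : V → V → ℝ≥0∞) (l : List V)
    (h : l.IsChain E) : walkWeight (sdist E w) l ≤ walkWeight w l := by
  induction l with
  | nil => simp [walkWeight]
  | cons a l ih =>
    cases l with
    | nil => simp
    | cons b l =>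
      rw [List.isChain_cons_cons] at h
      rw [walkWeight_cons_cons, walkWeight_cons_cons]
      exact add_le_add (sdist_le_of_edge E w h.1) (ih h.2)

/-- The infimum of the weights of walks of `D` that start at `a` and visit all vertices of `a :: l`
is at most the weight of `a :: l` in the shortest-distance digraph. Fixing the starting vertex `a` is what lets the
induction on `l` prepend a further walk. -/
lemma refinement_le (E : V → V → Prop) (w : V → V → ℝ≥0∞) (l : List V) (a : V) :
    (⨅ (q : List V) (_ : IsWalk E q ∧ q.head? = some a ∧ ∀ v ∈ a :: l, v ∈ q), walkWeight w q)
      ≤ walkWeight (sdist E w) (a :: l) := by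
  induction l generalizing a with
  | nil =>
    have hW : IsWalk E [a] := ⟨by simp, List.isChain_singleton a⟩
    exact (iInf₂_le [a] ⟨hW, by simp, by simp⟩).trans (by simp)
  | cons b l ih =>
    rw [walkWeight_cons_cons]
    refine le_trans ?_ (add_le_add_right (ih b) _)
    simp only [sdist, ENNReal.iInf_add, ENNReal.add_iInf]
    refine le_iInf₂ fun q hq => le_iInf₂ fun p hp => ?_
    obtain ⟨hqW, hqh, hqm⟩ := hq
    obtain ⟨hpW, hph, hpl⟩ := hp
    obtain ⟨q, rfl⟩ : ∃ q', q = b :: q' := by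
      cases q with
      | nil => simp at hqh
      | cons x q => exact ⟨q, by simpa using hqh⟩
    rw [← walkWeight_append w b q p hpl]
    refine iInf₂_le (p ++ q) ⟨isWalk_append E hpW hpl hqW, by simp [hph], ?_⟩
    intro v hv
    rcases List.mem_cons.1 hv with rfl | hv
    · exact List.mem_append_left _ (List.mem_of_head? hph)
    · rcases List.mem_cons.1 (hqm v hv) with rfl | hv
      · exact List.mem_append_left _ (List.mem_of_getLast? hpl)
      · exact List.mem_append_right _ hv

/-- For a strongly connected weighted digraph `D`, the walk-length filtration value of every
nonempty vertex set in `D` agrees with that in the associated shortest-distance digraph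
(the complete digraph with weight `ω_D`); in particular the walk-length filtrations
coincide. -/
theorem stmt1 [Fintype V] [Nonempty V] (E : V → V → Prop) (w : V → V → ℝ≥0)
    (hw0 : ∀ u v, E u v → (w u v = 0 ↔ u = v))
    (hsc : StronglyConnected E) :
    (∀ σ : Set V, σ.Nonempty →
        wlf E (fun u v => (w u v : ℝ≥0∞)) σ
          = wlf (fun _ _ => True) (sdist E fun u v => (w u v : ℝ≥0∞)) σ)
      ∧ ∀ δ : ℝ, wlComplex E (fun u v => (w u v : ℝ≥0∞)) δ
          = wlComplex (fun _ _ => True) (sdist E fun u v => (w u v : ℝ≥0∞)) δ := by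
  have key : ∀ σ : Set V, σ.Nonempty →
      wlf E (fun u v => (w u v : ℝ≥0∞)) σ
        = wlf (fun _ _ => True) (sdist E fun u v => (w u v : ℝ≥0∞)) σ := by
    intro σ _
    apply le_antisymm
    · refine le_iInf₂ fun l hl => ?_
      obtain ⟨⟨hne, -⟩, hσ⟩ := hl
      obtain ⟨a, l, rfl⟩ := List.exists_cons_of_ne_nil hne
      refine le_trans ?_ (refinement_le E _ l a)
      refine le_iInf₂ fun q hq => ?_
      exact iInf₂_le q ⟨hq.1, fun v hv => hq.2.2 v (hσ v hv)⟩
    · refine le_iInf₂ fun l hl => ?_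
      have hX : IsWalk (fun _ _ : V => True) l := ⟨hl.1.1, hl.1.2.imp fun _ _ _ => trivial⟩
      exact (iInf₂_le l ⟨hX, hl.2⟩).trans (walkWeight_sdist_le E _ l hl.1.2)
  refine ⟨key, fun δ => ?_⟩
  ext σ
  exact and_congr_right fun hσ => by rw [key σ hσ]
end

section
/- Let (X, ω_X) and (Y, ω_Y) be networks. If d¹_N(X, Y) = 0, then X and Y are isomorphic networks: there exists a bijection h : X → Y with ω_Y(h(x), h(x')) = ω_X(x, x') for all x, x' ∈ X. (Together with finiteness, identity and symmetry, this shows d¹_N is a semimetric on networks.) -/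
/-!
There are only finitely many relations between two finite sets, so the infimum defining the
distance is attained: some correspondence `R` has distortion zero. All summands of the distortion
being nonnegative, `ωX x x' = ωY y y'` for all `(x, y), (x', y') ∈ R`. Since each weight vanishes
exactly on the diagonal, `x = x'` if and only if `y = y'`, so `R` is the graph of a bijection,
and this bijection preserves weights.
-/

variable {X Y : Type*}

/-- The ℓ1-distortion of a relation `R ⊆ X × Y` between two networks:
`dis¹(R) = Σ_{(x,y),(x',y') ∈ R} |ω_X(x,x') − ω_Y(y,y')|`. -/
def dis1R (ωX : X → X → ℝ) (ωY : Y → Y → ℝ) (R : Finset (X × Y)) : ℝ :=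
  ∑ p ∈ R, ∑ q ∈ R, |ωX p.1 q.1 - ωY p.2 q.2|

/-- A correspondence between `X` and `Y`: a relation whose projections to `X` and to `Y`
are both surjective. -/
def IsCorr (R : Finset (X × Y)) : Prop :=
  (∀ x : X, ∃ y : Y, (x, y) ∈ R) ∧ (∀ y : Y, ∃ x : X, (x, y) ∈ R)

/-- The network ℓ1-distance `d¹_N(X, Y) = (1/2) inf { dis¹(R) : R a correspondence }`. -/
noncomputable def d1N (ωX : X → X → ℝ) (ωY : Y → Y → ℝ) : ℝ :=
  (1 / 2) * sInf {c | ∃ R : Finset (X × Y), IsCorr R ∧ dis1R ωX ωY R = c}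

/-- The minimum in the definition of the distance is attained. -/
lemma exists_isCorr_dis1R_eq_sInf [Fintype X] [Fintype Y] [Nonempty X] [Nonempty Y]
    (ωX : X → X → ℝ) (ωY : Y → Y → ℝ) :
    ∃ R : Finset (X × Y), IsCorr R ∧
      dis1R ωX ωY R = sInf {c | ∃ R : Finset (X × Y), IsCorr R ∧ dis1R ωX ωY R = c} := by
  have hne : {c | ∃ R : Finset (X × Y), IsCorr R ∧ dis1R ωX ωY R = c}.Nonempty :=
    ⟨_, Finset.univ, ⟨by simp, by simp⟩, rfl⟩
  have hfin : {c | ∃ R : Finset (X × Y), IsCorr R ∧ dis1R ωX ωY R = c}.Finite :=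
    (Set.toFinite {R : Finset (X × Y) | IsCorr R}).image (dis1R ωX ωY)
  exact hne.csInf_mem hfin

lemma weight_eq_of_dis1R_eq_zero {ωX : X → X → ℝ} {ωY : Y → Y → ℝ} {R : Finset (X × Y)}
    (hR : dis1R ωX ωY R = 0) {p q : X × Y} (hp : p ∈ R) (hq : q ∈ R) :
    ωX p.1 q.1 = ωY p.2 q.2 := by
  have hrow := (Finset.sum_eq_zero_iff_of_nonneg
    fun p _ => Finset.sum_nonneg fun q _ => abs_nonneg _).1 hR p hp
  have hpq := (Finset.sum_eq_zero_iff_of_nonneg fun q _ => abs_nonneg _).1 hrow q hq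
  exact sub_eq_zero.1 (abs_eq_zero.1 hpq)

/-- Separability of `d¹_N`: if `d¹_N(X, Y) = 0` then the networks `X` and `Y` are
isomorphic, i.e. there is a weight-preserving bijection between their vertex sets. -/
theorem stmt3 [Fintype X] [Fintype Y] [Nonempty X] [Nonempty Y]
    (ωX : X → X → ℝ) (ωY : Y → Y → ℝ)
    (hX0 : ∀ a b, 0 ≤ ωX a b) (hXz : ∀ a b, ωX a b = 0 ↔ a = b)
    (hY0 : ∀ a b, 0 ≤ ωY a b) (hYz : ∀ a b, ωY a b = 0 ↔ a = b)
    (h : d1N ωX ωY = 0) :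
    ∃ h : X ≃ Y, ∀ a b : X, ωY (h a) (h b) = ωX a b := by
  obtain ⟨R, ⟨hRX, hRY⟩, hR⟩ := exists_isCorr_dis1R_eq_sInf ωX ωY
  have hR0 : dis1R ωX ωY R = 0 := by
    unfold d1N at h
    linarith
  choose f hf using hRX
  have hpres : ∀ a b, ωX a b = ωY (f a) (f b) := fun a b =>
    weight_eq_of_dis1R_eq_zero hR0 (hf a) (hf b)
  have hinj : Function.Injective f := fun a b hab =>
    (hXz a b).1 (by rw [hpres, (hYz _ _).2 hab])
  have hsurj : Function.Surjective f := by
    intro y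
    obtain ⟨x, hx⟩ := hRY y
    -- `(x, f x)` and `(x, y)` both lie in `R`, and `ωX x x = 0`.
    have hxy : ωX x x = ωY (f x) y := weight_eq_of_dis1R_eq_zero hR0 (hf x) hx
    exact ⟨x, (hYz _ _).1 (by rw [← hxy, (hXz x x).2 rfl])⟩
  exact ⟨Equiv.ofBijective f ⟨hinj, hsurj⟩, fun a b => (hpres a b).symm⟩
end

section
/- For all networks X and Y, d^{1,map}_N(X, Y) ≤ d¹_N(X, Y). -/
/-!
Given a correspondence `R`, choose `φ x` with `(x, φ x) ∈ R` and `ψ y` with `(ψ y, y) ∈ R`. The maps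
`x ↦ (x, φ x)` and `y ↦ (ψ y, y)` are injections into `R`, and each of the four quantities
`dis¹(φ)`, `dis¹(ψ)`, `codis¹(φ, ψ)`, `codis¹(ψ, φ)` is the part of the double sum `dis¹(R)`
indexed by the images of two of these injections (`sum_le_dis1R`). As the terms of `dis¹(R)` are
nonnegative, all four are at most `dis¹(R)`, and it remains to take the infimum over `R`.
-/

variable {X Y : Type*}

/-- The ℓ1-distortion of a map `φ : X → Y`:
`dis¹(φ) = Σ_{x,x' ∈ X} |ω_X(x,x') − ω_Y(φ(x),φ(x'))|`. -/
noncomputable def dis1map [Fintype X] (ωX : X → X → ℝ) (ωY : Y → Y → ℝ) (φ : X → Y) : ℝ :=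
  ∑ x : X, ∑ x' : X, |ωX x x' - ωY (φ x) (φ x')|

/-- The ℓ1-codistortion of a pair of maps `φ : X → Y`, `ψ : Y → X`:
`codis¹(φ, ψ) = Σ_{(x,y) ∈ X × Y} |ω_X(x, ψ(y)) − ω_Y(φ(x), y)|`. -/
noncomputable def codis1 [Fintype X] [Fintype Y] (ωX : X → X → ℝ) (ωY : Y → Y → ℝ)
    (φ : X → Y) (ψ : Y → X) : ℝ :=
  ∑ x : X, ∑ y : Y, |ωX x (ψ y) - ωY (φ x) y|

/-- The map version of the network ℓ1-distance:
`d^{1,map}_N = (1/2) inf over pairs (φ, ψ) of max{dis¹(φ), dis¹(ψ), codis¹(φ,ψ), codis¹(ψ,φ)}`. -/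
noncomputable def d1mapN [Fintype X] [Fintype Y] (ωX : X → X → ℝ) (ωY : Y → Y → ℝ) : ℝ :=
  (1 / 2) * sInf {c | ∃ (φ : X → Y) (ψ : Y → X),
    c = max (max (dis1map ωX ωY φ) (dis1map ωY ωX ψ))
            (max (codis1 ωX ωY φ ψ) (codis1 ωY ωX ψ φ))}

lemma sum_le_sum_of_injective {A B : Type*} [Fintype A] {R : Finset B} {f : A → B}
    (hf : f.Injective) (hfR : ∀ a, f a ∈ R) {F : B → ℝ} (hF : ∀ b, 0 ≤ F b) :
    ∑ a, F (f a) ≤ ∑ b ∈ R, F b := by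
  have h := Finset.sum_map Finset.univ ⟨f, hf⟩ F
  simp only [Function.Embedding.coeFn_mk] at h
  rw [← h]
  refine Finset.sum_le_sum_of_subset_of_nonneg ?_ fun b _ _ => hF b
  intro b hb
  obtain ⟨a, -, rfl⟩ := Finset.mem_map.1 hb
  exact hfR a

/-- A pair of injections into `R` selects a sub-sum of `dis¹(R)`. -/
lemma sum_le_dis1R {A B : Type*} [Fintype A] [Fintype B] (ωX : X → X → ℝ) (ωY : Y → Y → ℝ)
    {R : Finset (X × Y)} {f : A → X × Y} {g : B → X × Y}
    (hf : f.Injective) (hg : g.Injective) (hfR : ∀ a, f a ∈ R) (hgR : ∀ b, g b ∈ R) :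
    ∑ a, ∑ b, |ωX (f a).1 (g b).1 - ωY (f a).2 (g b).2| ≤ dis1R ωX ωY R :=
  calc ∑ a, ∑ b, |ωX (f a).1 (g b).1 - ωY (f a).2 (g b).2|
      ≤ ∑ a, ∑ q ∈ R, |ωX (f a).1 q.1 - ωY (f a).2 q.2| :=
        Finset.sum_le_sum fun a _ => sum_le_sum_of_injective hg hgR
          (F := fun q => |ωX (f a).1 q.1 - ωY (f a).2 q.2|) fun _ => abs_nonneg _
    _ ≤ dis1R ωX ωY R :=
        sum_le_sum_of_injective hf hfR
          (F := fun p => ∑ q ∈ R, |ωX p.1 q.1 - ωY p.2 q.2|)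
          fun _ => Finset.sum_nonneg fun _ _ => abs_nonneg _

/-- For all networks `X` and `Y`, `d^{1,map}_N(X, Y) ≤ d¹_N(X, Y)`. -/
theorem stmt4 [Fintype X] [Fintype Y] [Nonempty X] [Nonempty Y]
    (ωX : X → X → ℝ) (ωY : Y → Y → ℝ)
    (hX0 : ∀ a b, 0 ≤ ωX a b) (hXz : ∀ a b, ωX a b = 0 ↔ a = b)
    (hY0 : ∀ a b, 0 ≤ ωY a b) (hYz : ∀ a b, ωY a b = 0 ↔ a = b) :
    d1mapN ωX ωY ≤ d1N ωX ωY := by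
  unfold d1mapN d1N
  refine mul_le_mul_of_nonneg_left (le_csInf ?_ ?_) (by norm_num)
  · refine ⟨_, Finset.univ, ⟨fun x => ?_, fun y => ?_⟩, rfl⟩
    · exact ⟨Classical.arbitrary Y, Finset.mem_univ _⟩
    · exact ⟨Classical.arbitrary X, Finset.mem_univ _⟩
  · rintro _ ⟨R, ⟨hRX, hRY⟩, rfl⟩
    choose φ hφ using hRX
    choose ψ hψ using hRY
    have hf : Function.Injective fun x => (x, φ x) := fun _ _ h => congrArg Prod.fst h
    have hg : Function.Injective fun y => (ψ y, y) := fun _ _ h => congrArg Prod.snd h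
    have hbdd : BddBelow {c | ∃ (φ : X → Y) (ψ : Y → X),
        c = max (max (dis1map ωX ωY φ) (dis1map ωY ωX ψ))
                (max (codis1 ωX ωY φ ψ) (codis1 ωY ωX ψ φ))} := by
      refine ⟨0, ?_⟩
      rintro _ ⟨φ, ψ, rfl⟩
      refine le_max_of_le_left (le_max_of_le_left ?_)
      exact Finset.sum_nonneg fun _ _ => Finset.sum_nonneg fun _ _ => abs_nonneg _
    refine (csInf_le hbdd ⟨φ, ψ, rfl⟩).trans (max_le (max_le ?_ ?_) (max_le ?_ ?_))
    · have h := sum_le_dis1R ωX ωY hf hf hφ hφ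
      exact h
    · have h := sum_le_dis1R ωX ωY hg hg hψ hψ
      refine (le_of_eq ?_).trans h
      exact Finset.sum_congr rfl fun _ _ => Finset.sum_congr rfl fun _ _ => abs_sub_comm _ _
    · have h := sum_le_dis1R ωX ωY hf hg hφ hψ
      exact h
    · have h := sum_le_dis1R ωX ωY hg hf hψ hφ
      refine (le_of_eq ?_).trans h
      exact Finset.sum_congr rfl fun _ _ => Finset.sum_congr rfl fun _ _ => abs_sub_comm _ _
end

section
/- The inequality d^{1,map}_N ≤ d¹_N can be strict: there exist networks X and Y, each with three vertices, such that d^{1,map}_N(X, Y) < d¹_N(X, Y). -/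
/-!
Both networks consist of a close pair `{0, 1}` (mutual weights `1`) and a third vertex `2`.
In `X` the weights from the pair to `2` are `3` and those from `2` to the pair are `2`; `Y` is the
transpose of `X`.

The map sending the pair to `2` and `2` to `0`, used in both directions, interchanges the two kinds
of cross weights. It matches them exactly and only collapses the pair, at a cost of `1 + 1 = 2`; the
codistortions are also `2`. Hence the map distance is at most `1`.

A correspondence contains the graphs of a map in each direction and pays for all its ordered pairs
in one sum, not in a maximum of four. If it matches `2` only with `2` and the pair only with the pair, it mismatches each of the four cross weights by `1`; any other correspondence
also costs at least `4`. Hence the correspondence distance is at least `2`. As the weights are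
integers, the bound `4` is decided over the `512` relations on `Fin 3 × Fin 3`.
-/

variable {X Y : Type*}

/-- The integer weights of `X`: row `a`, column `b` is the weight from `a` to `b`. The weights of
`Y` are the transpose. -/
def wX : Fin 3 → Fin 3 → ℤ :=
  ![![0, 1, 3], ![1, 0, 3], ![2, 2, 0]]

/-- The map collapsing the pair `{0, 1}` to `2` and sending `2` into the pair. -/
def collapse : Fin 3 → Fin 3 := ![2, 2, 0]

/-- Every correspondence between `X` and `Y` has distortion at least `4`. -/
theorem four_le_distortion :
    ∀ R : Finset (Fin 3 × Fin 3),
      ((∀ x, ∃ y, (x, y) ∈ R) ∧ (∀ y, ∃ x, (x, y) ∈ R)) →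
      4 ≤ ∑ p ∈ R, ∑ q ∈ R, |wX p.1 q.1 - wX q.2 p.2| := by
  decide +kernel

theorem two_le_d1N :
    2 ≤ d1N (fun a b => (wX a b : ℝ)) (fun a b => (wX b a : ℝ)) := by
  have h : (4 : ℝ) ≤ sInf {c | ∃ R : Finset (Fin 3 × Fin 3), IsCorr R ∧
      dis1R (fun a b => (wX a b : ℝ)) (fun a b => (wX b a : ℝ)) R = c} := by
    apply le_csInf
    · exact ⟨_, Finset.univ, ⟨fun x => ⟨x, Finset.mem_univ _⟩,
        fun y => ⟨y, Finset.mem_univ _⟩⟩, rfl⟩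
    · rintro c ⟨R, hR, rfl⟩
      have h4 := four_le_distortion R hR
      unfold dis1R
      beta_reduce
      exact_mod_cast h4
  unfold d1N
  linarith

theorem d1mapN_le_one :
    d1mapN (fun a b => (wX a b : ℝ)) (fun a b => (wX b a : ℝ)) ≤ 1 := by
  have h : sInf {c | ∃ (φ : Fin 3 → Fin 3) (ψ : Fin 3 → Fin 3),
      c = max (max (dis1map (fun a b => (wX a b : ℝ)) (fun a b => (wX b a : ℝ)) φ)
              (dis1map (fun a b => (wX b a : ℝ)) (fun a b => (wX a b : ℝ)) ψ))
            (max (codis1 (fun a b => (wX a b : ℝ)) (fun a b => (wX b a : ℝ)) φ ψ)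
              (codis1 (fun a b => (wX b a : ℝ)) (fun a b => (wX a b : ℝ)) ψ φ))} ≤ (2 : ℝ) := by
    apply csInf_le
    · refine ⟨0, ?_⟩
      rintro c ⟨φ, ψ, rfl⟩
      refine le_max_of_le_left (le_max_of_le_left ?_)
      unfold dis1map
      positivity
    · refine ⟨collapse, collapse, ?_⟩
      have h1 : ∑ x, ∑ y, |wX x y - wX (collapse y) (collapse x)| = 2 := by decide +kernel
      have h2 : ∑ x, ∑ y, |wX y x - wX (collapse x) (collapse y)| = 2 := by decide +kernel
      have h3 : ∑ x, ∑ y, |wX x (collapse y) - wX y (collapse x)| = 2 := by decide +kernel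
      have h4 : ∑ x, ∑ y, |wX (collapse y) x - wX (collapse x) y| = 2 := by decide +kernel
      unfold dis1map codis1
      have h1' : ∑ x, ∑ y, |(wX x y : ℝ) - wX (collapse y) (collapse x)| = 2 := by
        exact_mod_cast h1
      have h2' : ∑ x, ∑ y, |(wX y x : ℝ) - wX (collapse x) (collapse y)| = 2 := by
        exact_mod_cast h2
      have h3' : ∑ x, ∑ y, |(wX x (collapse y) : ℝ) - wX y (collapse x)| = 2 := by
        exact_mod_cast h3
      have h4' : ∑ x, ∑ y, |(wX (collapse y) x : ℝ) - wX (collapse x) y| = 2 := by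
        exact_mod_cast h4
      rw [h1', h2', h3', h4']
      simp
  unfold d1mapN
  linarith

/-- The inequality `d^{1,map}_N ≤ d¹_N` can be strict: there are networks `X` and `Y`,
each with three vertices, for which `d^{1,map}_N(X, Y) < d¹_N(X, Y)`. -/
theorem stmt5 :
    ∃ (ωX : Fin 3 → Fin 3 → ℝ) (ωY : Fin 3 → Fin 3 → ℝ),
      (∀ a b, 0 ≤ ωX a b) ∧ (∀ a b, ωX a b = 0 ↔ a = b) ∧
      (∀ a b, 0 ≤ ωY a b) ∧ (∀ a b, ωY a b = 0 ↔ a = b) ∧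
      d1mapN ωX ωY < d1N ωX ωY := by
  have hnn : ∀ a b, 0 ≤ wX a b := by decide
  have h0 : ∀ a b, wX a b = 0 ↔ a = b := by decide
  refine ⟨fun a b => (wX a b : ℝ), fun a b => (wX b a : ℝ), ?_, ?_, ?_, ?_, ?_⟩
  · exact fun a b => by beta_reduce; exact_mod_cast hnn a b
  · exact fun a b => by beta_reduce; exact_mod_cast h0 a b
  · exact fun a b => by beta_reduce; exact_mod_cast hnn b a
  · exact fun a b => by beta_reduce; rw [eq_comm (a := a)]; exact_mod_cast h0 b a
  · linarith [two_le_d1N, d1mapN_le_one]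
end

section
/- The network ℓ1-distance d¹_N fails the triangle inequality: there exist networks X, Y, Z such that d¹_N(X, Z) > d¹_N(X, Y) + d¹_N(Y, Z). -/
/-!
The counterexample rests on the fact that `d¹_N` does not normalise by the number of points.
Let `X` be two points at distance `5`, `Y` two points at distance `4`, and `Z` the network
`{0, 1, 2}` in which `0, 1` are at distance `1` and both are at distance `4` from `2`; thus `Z` is
`Y` with one point split in two. Matching `X` to `Y` bijectively has distortion `2`, and collapsing
`Z` onto `Y` also has distortion `2`, so `d¹_N(X, Y) + d¹_N(Y, Z) ≤ 1 + 1`. Between `X` and `Z`,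
however, the discrepancy `5 - 4` is paid once for each of the two copies of the split point:
a correspondence contains the graph of some map `f : Z → X`, and each of the eight such maps has
distortion at least `6`, so `d¹_N(X, Z) ≥ 3`.
-/

variable {X Y : Type*}

/-- The network on `n` points whose distinct points are all at distance `c`. -/
def unifNet (n : ℕ) (c : ℝ) (a b : Fin n) : ℝ := if a = b then 0 else c

/-- The network on `{0, 1, 2}` with `0, 1` at distance `1` and both at distance `4` from `2`. -/
def splitNet (a b : Fin 3) : ℝ := if a = b then 0 else if a = 2 ∨ b = 2 then 4 else 1

/-- The distortion of the graph of `f : Y → X` is a sum over pairs of points of `Y`. -/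
lemma dis1R_graph {A B : Type*} [Fintype B] [DecidableEq A] [DecidableEq B]
    (ωA : A → A → ℝ) (ωB : B → B → ℝ) (f : B → A) :
    dis1R ωA ωB (Finset.univ.image fun b => (f b, b)) =
      ∑ b, ∑ b', |ωA (f b) (f b') - ωB b b'| := by
  have hinj : Function.Injective fun b => (f b, b) := fun b b' h => (Prod.ext_iff.1 h).2
  unfold dis1R
  simp only [Finset.sum_image hinj.injOn]

lemma dis1R_nonneg {A B : Type*} (ωA : A → A → ℝ) (ωB : B → B → ℝ) (R : Finset (A × B)) :
    0 ≤ dis1R ωA ωB R :=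
  Finset.sum_nonneg fun _ _ => Finset.sum_nonneg fun _ _ => abs_nonneg _

lemma dis1R_mono {A B : Type*} (ωA : A → A → ℝ) (ωB : B → B → ℝ) {S R : Finset (A × B)}
    (h : S ⊆ R) : dis1R ωA ωB S ≤ dis1R ωA ωB R :=
  (Finset.sum_le_sum fun _ _ =>
      Finset.sum_le_sum_of_subset_of_nonneg h fun _ _ _ => abs_nonneg _).trans
    (Finset.sum_le_sum_of_subset_of_nonneg h fun _ _ _ =>
      Finset.sum_nonneg fun _ _ => abs_nonneg _)

/-- A surjection `f : Y → X` bounds `d¹_N(X, Y)` above, its graph being a correspondence. -/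
lemma d1N_le_of_surjective {A B : Type*} [Fintype B] [DecidableEq A] [DecidableEq B]
    (ωA : A → A → ℝ) (ωB : B → B → ℝ) (f : B → A) (hf : Function.Surjective f) :
    d1N ωA ωB ≤ (1 / 2) * ∑ b, ∑ b', |ωA (f b) (f b') - ωB b b'| := by
  unfold d1N
  refine mul_le_mul_of_nonneg_left (csInf_le ⟨0, ?_⟩ ?_) (by norm_num)
  · rintro c ⟨R, -, rfl⟩
    exact dis1R_nonneg _ _ _
  · refine ⟨Finset.univ.image fun b => (f b, b), ⟨fun a => ?_, fun b => ?_⟩, dis1R_graph _ _ _⟩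
    · obtain ⟨b, rfl⟩ := hf a
      exact ⟨b, by simp⟩
    · exact ⟨f b, by simp⟩

/-- A bound valid for the graph of every map `Y → X` is a lower bound for `d¹_N(X, Y)`, since
every correspondence contains such a graph. -/
lemma le_d1N {A B : Type*} [Fintype A] [Fintype B] [Nonempty A] [Nonempty B]
    (ωA : A → A → ℝ) (ωB : B → B → ℝ) (c : ℝ)
    (h : ∀ f : B → A, c ≤ ∑ b, ∑ b', |ωA (f b) (f b') - ωB b b'|) :
    (1 / 2) * c ≤ d1N ωA ωB := by
  classical
  unfold d1N
  refine mul_le_mul_of_nonneg_left (le_csInf ?_ ?_) (by norm_num)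
  · exact ⟨_, Finset.univ, ⟨fun _ => ⟨Classical.arbitrary B, Finset.mem_univ _⟩,
      fun _ => ⟨Classical.arbitrary A, Finset.mem_univ _⟩⟩, rfl⟩
  · rintro _ ⟨R, ⟨-, hR⟩, rfl⟩
    choose f hf using hR
    refine (h f).trans ((dis1R_graph ωA ωB f).symm.le.trans (dis1R_mono _ _ ?_))
    intro p hp
    obtain ⟨b, -, rfl⟩ := Finset.mem_image.1 hp
    exact hf b

/-- The network ℓ1-distance `d¹_N` fails the triangle inequality: there exist networks
`X`, `Y`, `Z` with `d¹_N(X, Z) > d¹_N(X, Y) + d¹_N(Y, Z)`. -/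
theorem stmt6 :
    ∃ (nx ny nz : ℕ) (ωX : Fin nx → Fin nx → ℝ) (ωY : Fin ny → Fin ny → ℝ)
      (ωZ : Fin nz → Fin nz → ℝ),
      0 < nx ∧ 0 < ny ∧ 0 < nz ∧
      (∀ a b, 0 ≤ ωX a b) ∧ (∀ a b, ωX a b = 0 ↔ a = b) ∧
      (∀ a b, 0 ≤ ωY a b) ∧ (∀ a b, ωY a b = 0 ↔ a = b) ∧
      (∀ a b, 0 ≤ ωZ a b) ∧ (∀ a b, ωZ a b = 0 ↔ a = b) ∧
      d1N ωX ωZ > d1N ωX ωY + d1N ωY ωZ := by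
  refine ⟨2, 2, 3, unifNet 2 5, unifNet 2 4, splitNet, by norm_num, by norm_num, by norm_num,
    ?_, ?_, ?_, ?_, ?_, ?_, ?_⟩
  · intro a b; unfold unifNet; split_ifs <;> norm_num
  · intro a b; unfold unifNet; split_ifs <;> simp_all
  · intro a b; unfold unifNet; split_ifs <;> norm_num
  · intro a b; unfold unifNet; split_ifs <;> simp_all
  · intro a b; unfold splitNet; split_ifs <;> norm_num
  · intro a b; unfold splitNet; split_ifs <;> simp_all
  · have hXY := d1N_le_of_surjective (unifNet 2 5) (unifNet 2 4) id Function.surjective_id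
    have hYZ := d1N_le_of_surjective (unifNet 2 4) splitNet ![0, 0, 1] (by decide)
    have hXZ := le_d1N (unifNet 2 5) splitNet 6 (by
      intro f
      simp only [Fin.sum_univ_three]
      generalize f 0 = u
      generalize f 1 = v
      generalize f 2 = w
      fin_cases u <;> fin_cases v <;> fin_cases w <;>
        norm_num [unifNet, splitNet, abs_of_nonneg, abs_of_nonpos, Fin.ext_iff])
    have eXY : ∑ b, ∑ b', |unifNet 2 5 (id b) (id b') - unifNet 2 4 b b'| = 2 := by
      simp only [Fin.sum_univ_two]
      norm_num [unifNet]
    have eYZ : ∑ b, ∑ b', |unifNet 2 4 (![0, 0, 1] b) (![0, 0, 1] b') - splitNet b b'| = 2 := by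
      simp only [Fin.sum_univ_three]
      have h2 : (![0, 0, 1] : Fin 3 → Fin 2) 2 = 1 := rfl
      have h02 : (0 : Fin 3) ≠ 2 := by decide
      have h12 : (1 : Fin 3) ≠ 2 := by decide
      norm_num [unifNet, splitNet, h2, h02, h12, h02.symm, h12.symm]
    rw [eXY] at hXY
    rw [eYZ] at hYZ
    linarith
end

section
/- For any three networks X, Y, Z each having exactly M vertices, d¹_{N,bij}(X, Z) ≤ d¹_{N,bij}(X, Y) + d¹_{N,bij}(Y, Z); that is, the bijective network ℓ1-distance satisfies the triangle inequality on the collection of networks with M vertices. -/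
/-!
There are finitely many bijections, and at least one since the cardinalities agree, so optimal
bijections `e : X ≃ Y` and `f : Y ≃ Z` exist, and it suffices to bound the distortion of `f ∘ e`.
Inserting `ωY (e x) (e x')` in each summand `|ωX x x' - ωZ (f (e x)) (f (e x'))|` gives
`dis¹(f ∘ e) ≤ dis¹(e) + dis¹(f)`, after reindexing the second sum along `e`.
-/

variable {X Y Z : Type*}

/-- The graph of a bijection `e : X ≃ Y`, as a relation in `X × Y`. -/
def bijGraph [Fintype X] [DecidableEq X] [DecidableEq Y] (e : X ≃ Y) : Finset (X × Y) :=
  Finset.univ.image fun x => (x, e x)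

/-- The bijective network ℓ1-distance
`d¹_{N,bij}(X, Y) = (1/2) inf { dis¹(R) : R the graph of a bijection X → Y }`. -/
noncomputable def d1bij [Fintype X] [DecidableEq X] [DecidableEq Y]
    (ωX : X → X → ℝ) (ωY : Y → Y → ℝ) : ℝ :=
  (1 / 2) * sInf {c | ∃ e : X ≃ Y, dis1R ωX ωY (bijGraph e) = c}

/-- The distortion of a bijection as a double sum over the vertices of its domain. -/
theorem dis1R_bijGraph [Fintype X] [DecidableEq X] [DecidableEq Y]
    (ωX : X → X → ℝ) (ωY : Y → Y → ℝ) (e : X ≃ Y) :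
    dis1R ωX ωY (bijGraph e) = ∑ x, ∑ x', |ωX x x' - ωY (e x) (e x')| := by
  have h : Function.Injective fun x => (x, e x) := fun a b hab => congrArg Prod.fst hab
  simp [dis1R, bijGraph, Finset.sum_image h.injOn]

theorem dis1R_nonneg_s7 (ωX : X → X → ℝ) (ωY : Y → Y → ℝ) (R : Finset (X × Y)) :
    0 ≤ dis1R ωX ωY R :=
  Finset.sum_nonneg fun _ _ => Finset.sum_nonneg fun _ _ => abs_nonneg _

theorem dis1R_trans_le [Fintype X] [Fintype Y]
    [DecidableEq X] [DecidableEq Y] [DecidableEq Z]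
    (ωX : X → X → ℝ) (ωY : Y → Y → ℝ) (ωZ : Z → Z → ℝ) (e : X ≃ Y) (f : Y ≃ Z) :
    dis1R ωX ωZ (bijGraph (e.trans f)) ≤
      dis1R ωX ωY (bijGraph e) + dis1R ωY ωZ (bijGraph f) := by
  have h : ∑ y, ∑ y', |ωY y y' - ωZ (f y) (f y')| =
      ∑ x, ∑ x', |ωY (e x) (e x') - ωZ (f (e x)) (f (e x'))| := by
    rw [← Equiv.sum_comp e]
    exact Finset.sum_congr rfl fun x _ => (Equiv.sum_comp e _).symm
  rw [dis1R_bijGraph, dis1R_bijGraph, dis1R_bijGraph, h, ← Finset.sum_add_distrib]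
  refine Finset.sum_le_sum fun x _ => ?_
  rw [← Finset.sum_add_distrib]
  exact Finset.sum_le_sum fun x' _ => abs_sub_le _ _ _

/-- The infimum defining `d1bij` is attained: the set of bijections is finite and nonempty. -/
theorem exists_d1bij_eq [Fintype X] [Fintype Y] [DecidableEq X] [DecidableEq Y]
    (h : Fintype.card X = Fintype.card Y) (ωX : X → X → ℝ) (ωY : Y → Y → ℝ) :
    ∃ e : X ≃ Y, d1bij ωX ωY = 1 / 2 * dis1R ωX ωY (bijGraph e) := by
  have hne : (Set.range fun e : X ≃ Y => dis1R ωX ωY (bijGraph e)).Nonempty :=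
    ⟨_, Fintype.equivOfCardEq h, rfl⟩
  obtain ⟨e, he⟩ := hne.csInf_mem (Set.finite_range _)
  exact ⟨e, congrArg (1 / 2 * ·) he.symm⟩

theorem d1bij_le [Fintype X] [DecidableEq X] [DecidableEq Y]
    (ωX : X → X → ℝ) (ωY : Y → Y → ℝ) (e : X ≃ Y) :
    d1bij ωX ωY ≤ 1 / 2 * dis1R ωX ωY (bijGraph e) := by
  refine mul_le_mul_of_nonneg_left (csInf_le ⟨0, ?_⟩ ⟨e, rfl⟩) (by norm_num)
  rintro _ ⟨e', rfl⟩
  exact dis1R_nonneg_s7 _ _ _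

/-- The bijective network ℓ1-distance satisfies the triangle inequality on the collection
of networks with exactly `M` vertices. -/
theorem stmt7 [Fintype X] [Fintype Y] [Fintype Z]
    [DecidableEq X] [DecidableEq Y] [DecidableEq Z]
    (M : ℕ) (hM : 0 < M)
    (hX : Fintype.card X = M) (hY : Fintype.card Y = M) (hZ : Fintype.card Z = M)
    (ωX : X → X → ℝ) (ωY : Y → Y → ℝ) (ωZ : Z → Z → ℝ)
    (hX0 : ∀ a b, 0 ≤ ωX a b) (hXz : ∀ a b, ωX a b = 0 ↔ a = b)
    (hY0 : ∀ a b, 0 ≤ ωY a b) (hYz : ∀ a b, ωY a b = 0 ↔ a = b)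
    (hZ0 : ∀ a b, 0 ≤ ωZ a b) (hZz : ∀ a b, ωZ a b = 0 ↔ a = b) :
    d1bij ωX ωZ ≤ d1bij ωX ωY + d1bij ωY ωZ := by
  obtain ⟨e, he⟩ := exists_d1bij_eq (hX.trans hY.symm) ωX ωY
  obtain ⟨f, hf⟩ := exists_d1bij_eq (hY.trans hZ.symm) ωY ωZ
  rw [he, hf]
  linarith [d1bij_le ωX ωZ (e.trans f), dis1R_trans_le ωX ωY ωZ e f]
end

section
/- For natural numbers N and K with 2K ≤ N, the partial sum of binomial coefficients satisfies Σ_{i=0}^{K} C(N, i) ≤ C(N, K) · (N − K + 1)/(N − 2K + 1), where the inequality is taken in the rational numbers. -/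
/-! The proof is by induction on `K`. Writing `c = C(N, K)`, the identity
`C(N, K+1) (K+1) = c (N − K)` shows that the bound at `K + 1` exceeds its own last term `C(N, K+1)`
by exactly `c (N − K)/(N − 2K − 1)`. This dominates the bound `c (N − K + 1)/(N − 2K + 1)` at `K`,
since cross-multiplying reduces the comparison to `N − 2K − 1 ≤ 2 (N − K)`. -/

/-- For natural numbers `N`, `K` with `2K ≤ N`, the partial sum of binomial coefficients
satisfies `Σ_{i=0}^{K} C(N, i) ≤ C(N, K) · (N − K + 1)/(N − 2K + 1)` in `ℚ`. -/
theorem stmt18 (N K : ℕ) (h : 2 * K ≤ N) :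
    (∑ i ∈ Finset.range (K + 1), (N.choose i : ℚ))
      ≤ (N.choose K : ℚ) * ((N : ℚ) - K + 1) / ((N : ℚ) - 2 * K + 1) := by
  induction K with
  | zero =>
    have hN : (N : ℚ) + 1 ≠ 0 := by positivity
    simp [hN]
  | succ K ih =>
    have hN : 2 * ((K : ℚ) + 1) ≤ N := by exact_mod_cast h
    have hK : (0 : ℚ) ≤ K := K.cast_nonneg
    have hc : (0 : ℚ) ≤ N.choose K := Nat.cast_nonneg _
    have hpos : (0 : ℚ) < (N : ℚ) - 2 * K - 1 := by linarith
    have hpos' : (0 : ℚ) < (N : ℚ) - 2 * K + 1 := by linarith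
    have hrec : (N.choose (K + 1) : ℚ) * (K + 1) = N.choose K * ((N : ℚ) - K) := by
      have := Nat.choose_succ_right_eq N K
      rw [← Nat.cast_sub (by omega : K ≤ N)]
      exact_mod_cast this
    have hratio : (N.choose K : ℚ) * ((N : ℚ) - K + 1) / ((N : ℚ) - 2 * K + 1)
        ≤ N.choose K * ((N : ℚ) - K) / ((N : ℚ) - 2 * K - 1) := by
      rw [mul_div_assoc, mul_div_assoc]
      refine mul_le_mul_of_nonneg_left ?_ hc
      rw [div_le_div_iff₀ hpos' hpos]
      linarith
    have hsplit : (N.choose (K + 1) : ℚ) * ((N : ℚ) - (K + 1 : ℕ) + 1)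
          / ((N : ℚ) - 2 * (K + 1 : ℕ) + 1)
        = N.choose K * ((N : ℚ) - K) / ((N : ℚ) - 2 * K - 1) + N.choose (K + 1) := by
      have hden : (N : ℚ) - 2 * (K + 1 : ℕ) + 1 = N - 2 * K - 1 := by push_cast; ring
      rw [← hrec, hden, div_add' _ _ _ hpos.ne']
      push_cast
      ring
    rw [Finset.sum_range_succ, hsplit]
    have := ih (by omega)
    linarith
end

section
/- For natural numbers n and k with n ≥ 2k + 3, one has Σ_{d=0}^{k+1} C(n, d+1) · 2(d+1) = 2n · Σ_{d=0}^{k+1} C(n−1, d) ≤ 2n · C(n−1, k+1) · (n − k − 1)/(n − 2k − 2), where the inequality is taken in the rational numbers. -/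
/-!
The equality is the absorption identity `(d + 1) C(n, d + 1) = n C(n - 1, d)`, summed over `d`.
For the inequality, put `m = n - 1` and `j = k + 1`: it is the classical tail bound
`Σ_{d ≤ j} C(m, d) ≤ C(m, j) (m - j + 1) / (m - 2j + 1)` for `2j ≤ m`, proved by induction on `j`
from `C(m, j + 1) (j + 1) = C(m, j) (m - j)`.
-/

/-- The tail bound for partial sums of binomial coefficients, with the denominator cleared. -/
theorem sum_choose_mul_le (m j : ℕ) (h : 2 * j ≤ m) :
    (∑ d ∈ Finset.range (j + 1), (m.choose d : ℚ)) * ((m : ℚ) - 2 * j + 1)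
      ≤ (m.choose j : ℚ) * ((m : ℚ) - j + 1) := by
  induction j with
  | zero => simp
  | succ j ih =>
    have ih := ih (by omega)
    rw [Finset.sum_range_succ]
    set S := ∑ d ∈ Finset.range (j + 1), (m.choose d : ℚ)
    have hC : (m.choose (j + 1) : ℚ) * ((j : ℚ) + 1) = (m.choose j : ℚ) * ((m : ℚ) - j) := by
      have := Nat.choose_succ_right_eq m j
      rw [← Nat.cast_sub (by omega : j ≤ m)]
      exact_mod_cast this
    have hm : 2 * ((j : ℚ) + 1) ≤ m := by exact_mod_cast h
    have hj : (0 : ℚ) ≤ j := j.cast_nonneg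
    have hc : (0 : ℚ) ≤ m.choose j := Nat.cast_nonneg _
    -- With `a = m - j` and `b = m - 2j`, the step rests on `(a + 1) (b - 1) ≤ a (b + 1)`.
    have key : S * ((m : ℚ) - 2 * j - 1) ≤ (m.choose j : ℚ) * ((m : ℚ) - j) := by
      have hb : (0 : ℚ) < (m : ℚ) - 2 * j + 1 := by linarith
      refine le_of_mul_le_mul_right ?_ hb
      have h1 := mul_le_mul_of_nonneg_right ih (by linarith : (0 : ℚ) ≤ (m : ℚ) - 2 * j - 1)
      have h2 : (((m : ℚ) - j + 1) * ((m : ℚ) - 2 * j - 1))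
          ≤ ((m : ℚ) - j) * ((m : ℚ) - 2 * j + 1) := by nlinarith
      have h3 := mul_le_mul_of_nonneg_left h2 hc
      linarith
    push_cast
    linarith

/-- For natural numbers `n`, `k` with `n ≥ 2k + 3`,
`Σ_{d=0}^{k+1} C(n, d+1) · 2(d+1) = 2n · Σ_{d=0}^{k+1} C(n−1, d)
  ≤ 2n · C(n−1, k+1) · (n − k − 1)/(n − 2k − 2)` in `ℚ`. -/
theorem stmt19 (n k : ℕ) (h : 2 * k + 3 ≤ n) :
    (∑ d ∈ Finset.range (k + 2), (n.choose (d + 1) : ℚ) * (2 * ((d : ℚ) + 1)))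
        = 2 * (n : ℚ) * ∑ d ∈ Finset.range (k + 2), ((n - 1).choose d : ℚ)
      ∧ 2 * (n : ℚ) * (∑ d ∈ Finset.range (k + 2), ((n - 1).choose d : ℚ))
        ≤ 2 * (n : ℚ) * ((n - 1).choose (k + 1) : ℚ) * ((n : ℚ) - k - 1)
            / ((n : ℚ) - 2 * k - 2) := by
  obtain ⟨m, rfl⟩ : ∃ m, n = m + 1 := ⟨n - 1, by omega⟩
  rw [Nat.add_sub_cancel]
  constructor
  · rw [Finset.mul_sum]
    refine Finset.sum_congr rfl fun d _ => ?_
    have hd : ((m : ℚ) + 1) * (m.choose d : ℚ) = ((m + 1).choose (d + 1) : ℚ) * ((d : ℚ) + 1) := by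
      exact_mod_cast Nat.add_one_mul_choose_eq m d
    push_cast
    linarith
  · have hb := sum_choose_mul_le m (k + 1) (by omega)
    have hm : 2 * (k : ℚ) + 3 ≤ ((m + 1 : ℕ) : ℚ) := by exact_mod_cast h
    rw [le_div_iff₀ (by linarith)]
    have h2 := mul_le_mul_of_nonneg_left hb
      (by positivity : (0 : ℚ) ≤ 2 * ((m + 1 : ℕ) : ℚ))
    push_cast at h2 ⊢
    linarith
end
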